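/- Let 0 ≤ α < 2. For every smooth function z : ℝ → ℝ with compact support contained in the open interval (0,1), one has the Hardy-type inequality ((1-α)²/4) · ∫₀¹ z(x)²/x^{2-α} dx ≤ ∫₀¹ x^α z′(x)² dx. -/

import Mathlib

/-!
Integrating `0 ≤ x ^ (α - 2) * ‖x • z' x - c • z x‖ ^ 2` and removing the cross term
`x ^ (α - 1) * ⟪z, z'⟫` by an integration by parts gives
`((1 - α) * c - c ^ 2) * ∫ x ^ (α - 2) * ‖z x‖ ^ 2 ≤ ∫ x ^ α * ‖z' x‖ ^ 2` for every real `c`.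
The constant on the left is largest at `c = (1 - α) / 2`, where it equals `(1 - α) ^ 2 / 4`.
-/

open MeasureTheory

lemma support_norm_sq {X F : Type*} [NormedAddCommGroup F] (f : X → F) :
    Function.support (fun x ↦ ‖f x‖ ^ 2) = Function.support f := by
  ext x; simp

section RpowWeight

lemma setIntegral_div_rpow_eq_integral_rpow_neg_mul {μ : Measure ℝ} {f : ℝ → ℝ} {s : Set ℝ}
    (hs : s ⊆ Set.Ici 0) (hf : Function.support f ⊆ s) (β : ℝ) :
    ∫ x in s, f x / x ^ β ∂μ = ∫ x, x ^ (-β) * f x ∂μ := by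
  have hf_zero {x : ℝ} (hx : x ∉ s) : f x = 0 := Function.notMem_support.1 fun h ↦ hx (hf h)
  rw [setIntegral_eq_integral_of_forall_compl_eq_zero fun x hx ↦ by simp [hf_zero hx]]
  refine integral_congr_ae (.of_forall fun x ↦ ?_)
  by_cases hx : x ∈ s
  · simp only [Real.rpow_neg (hs hx), div_eq_inv_mul]
  · simp [hf_zero hx]

variable {F : Type*} [NormedAddCommGroup F] [NormedSpace ℝ F] {g : ℝ → F} {K : Set ℝ}

lemma integrable_rpow_smul_of_support_subset {μ : Measure ℝ} [IsFiniteMeasureOnCompacts μ]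
    (hg : Continuous g) (hK : IsCompact K) (hK_zero : 0 ∉ K) (hgK : Function.support g ⊆ K)
    (β : ℝ) : Integrable (fun x ↦ x ^ β • g x) μ := by
  have h_tsupport : tsupport (fun x ↦ x ^ β • g x) ⊆ K :=
    (tsupport_smul_subset_right _ g).trans (closure_minimal hgK hK.isClosed)
  refine Continuous.integrable_of_hasCompactSupport ?_
    (hK.of_isClosed_subset (isClosed_tsupport _) h_tsupport)
  refine continuous_of_tsupport fun x hx ↦ ?_
  have hx_ne : x ≠ 0 := ne_of_mem_of_not_mem (h_tsupport hx) hK_zero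
  exact (Real.continuousAt_rpow_const x β (.inl hx_ne)).smul hg.continuousAt

lemma integral_rpow_smul_deriv_eq_neg (hg : ContDiff ℝ 1 g) (hK : IsCompact K) (hK_zero : 0 ∉ K)
    (hgK : Function.support g ⊆ K) (β : ℝ) :
    ∫ x : ℝ, x ^ β • deriv g x = -(β • ∫ x : ℝ, x ^ (β - 1) • g x) := by
  have h_tsupport : tsupport g ⊆ K := closure_minimal hgK hK.isClosed
  have h_int (γ : ℝ) : Integrable fun x : ℝ ↦ x ^ γ • g x :=
    integrable_rpow_smul_of_support_subset hg.continuous hK hK_zero hgK γ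
  have h_int_deriv : Integrable fun x : ℝ ↦ x ^ β • deriv g x :=
    integrable_rpow_smul_of_support_subset (hg.continuous_deriv le_rfl) hK hK_zero
      (support_deriv_subset.trans h_tsupport) β
  have h_int_rpow_deriv : Integrable fun x : ℝ ↦ (β * x ^ (β - 1)) • g x := by
    simpa only [mul_smul] using (h_int (β - 1)).fun_smul β
  have h_rpow : ∀ x ∈ tsupport g, HasDerivAt (fun x : ℝ ↦ x ^ β) (β * x ^ (β - 1)) x :=
    fun x hx ↦ Real.hasDerivAt_rpow_const (.inl (ne_of_mem_of_not_mem (h_tsupport hx) hK_zero))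
  have h_parts := integral_bilinear_hasDerivAt_right_eq_neg_left_of_integrable
    (L := ContinuousLinearMap.lsmul ℝ ℝ) h_rpow
    (fun x _ ↦ (hg.differentiable one_ne_zero x).hasDerivAt) h_int_deriv h_int_rpow_deriv (h_int β)
  simpa only [ContinuousLinearMap.lsmul_apply, mul_smul, integral_smul] using h_parts

end RpowWeight

section Hardy

open scoped InnerProductSpace

variable {E : Type*} [NormedAddCommGroup E] [InnerProductSpace ℝ E] {z : ℝ → E}

lemma integral_rpow_mul_inner_deriv (hz : ContDiff ℝ 1 z) (hz_compact : HasCompactSupport z)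
    (hz_zero : 0 ∉ tsupport z) (β : ℝ) :
    2 * ∫ x : ℝ, x ^ β * ⟪z x, deriv z x⟫_ℝ = -(β * ∫ x : ℝ, x ^ (β - 1) * ‖z x‖ ^ 2) := by
  have h_deriv (x : ℝ) : deriv (fun x ↦ ‖z x‖ ^ 2) x = 2 * ⟪z x, deriv z x⟫_ℝ :=
    (hz.differentiable one_ne_zero x).hasDerivAt.norm_sq.deriv
  have h_parts := integral_rpow_smul_deriv_eq_neg (hz.norm_sq ℝ) hz_compact hz_zero
    ((support_norm_sq z).trans_subset (subset_tsupport z)) β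
  simpa only [h_deriv, smul_eq_mul, mul_left_comm _ (2 : ℝ), integral_const_mul] using h_parts

lemma rpow_mul_norm_smul_sub_smul_sq {x : ℝ} (hx : 0 < x) (α c : ℝ) (a b : E) :
    x ^ (α - 2) * ‖x • b - c • a‖ ^ 2 =
      x ^ α * ‖b‖ ^ 2 - 2 * c * (x ^ (α - 1) * ⟪a, b⟫_ℝ) + c ^ 2 * (x ^ (α - 2) * ‖a‖ ^ 2) := by
  have h_one : x ^ (α - 1) = x ^ (α - 2) * x := by
    rw [← Real.rpow_add_one hx.ne']; ring_nf
  have h_two : x ^ α = x ^ (α - 2) * x ^ 2 := by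
    rw [← Real.rpow_add_natCast hx.ne']; norm_num
  rw [h_one, h_two, norm_sub_sq_real, norm_smul, norm_smul, real_inner_smul_left,
    real_inner_smul_right, real_inner_comm, mul_pow, mul_pow, Real.norm_eq_abs, Real.norm_eq_abs,
    sq_abs, sq_abs]
  ring

theorem integral_rpow_mul_norm_deriv_sq_eq (hz : ContDiff ℝ 1 z) (hz_compact : HasCompactSupport z)
    (hz_pos : tsupport z ⊆ Set.Ioi 0) (α c : ℝ) :
    ∫ x : ℝ, x ^ α * ‖deriv z x‖ ^ 2 =
      ((1 - α) * c - c ^ 2) * (∫ x : ℝ, x ^ (α - 2) * ‖z x‖ ^ 2) +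
        ∫ x : ℝ, x ^ (α - 2) * ‖x • deriv z x - c • z x‖ ^ 2 := by
  have hz_zero : 0 ∉ tsupport z := fun h ↦ lt_irrefl (0 : ℝ) (hz_pos h)
  have hz' : Continuous (deriv z) := hz.continuous_deriv le_rfl
  have h_deriv_sq : Integrable fun x : ℝ ↦ x ^ α * ‖deriv z x‖ ^ 2 :=
    integrable_rpow_smul_of_support_subset (hz'.norm.pow 2) hz_compact hz_zero
      ((support_norm_sq _).trans_subset support_deriv_subset) α
  have h_inner : Integrable fun x : ℝ ↦ x ^ (α - 1) * ⟪z x, deriv z x⟫_ℝ :=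
    integrable_rpow_smul_of_support_subset (hz.continuous.inner hz') hz_compact hz_zero
      (fun x hx ↦ subset_tsupport z fun h ↦ hx (by simp [h])) (α - 1)
  have h_sq : Integrable fun x : ℝ ↦ x ^ (α - 2) * ‖z x‖ ^ 2 :=
    integrable_rpow_smul_of_support_subset (hz.continuous.norm.pow 2) hz_compact hz_zero
      ((support_norm_sq z).trans_subset (subset_tsupport z)) (α - 2)
  have h_sub : Integrable fun x : ℝ ↦
      x ^ α * ‖deriv z x‖ ^ 2 - 2 * c * (x ^ (α - 1) * ⟪z x, deriv z x⟫_ℝ) :=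
    h_deriv_sq.sub (h_inner.const_mul _)
  have h_expand (x : ℝ) : x ^ (α - 2) * ‖x • deriv z x - c • z x‖ ^ 2 =
      x ^ α * ‖deriv z x‖ ^ 2 - 2 * c * (x ^ (α - 1) * ⟪z x, deriv z x⟫_ℝ) +
        c ^ 2 * (x ^ (α - 2) * ‖z x‖ ^ 2) := by
    by_cases hx : x ∈ tsupport z
    · exact rpow_mul_norm_smul_sub_smul_sq (hz_pos hx) α c (z x) (deriv z x)
    · simp [image_eq_zero_of_notMem_tsupport hx, deriv_of_notMem_tsupport hx]
  have h_parts := integral_rpow_mul_inner_deriv hz hz_compact hz_zero (α - 1)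
  rw [show α - 1 - 1 = α - 2 by ring] at h_parts
  simp_rw [h_expand]
  rw [integral_add h_sub (h_sq.const_mul _),
    integral_sub h_deriv_sq (h_inner.const_mul _), integral_const_mul, integral_const_mul]
  linear_combination c * h_parts

theorem hardy_inequality_general (hz : ContDiff ℝ 1 z) (hz_compact : HasCompactSupport z)
    {s : Set ℝ} (hs : s ⊆ Set.Ioi 0) (hzs : tsupport z ⊆ s) (α : ℝ) :
    (1 - α) ^ 2 / 4 * (∫ x in s, ‖z x‖ ^ 2 / x ^ (2 - α)) ≤
      ∫ x in s, x ^ α * ‖deriv z x‖ ^ 2 := by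
  have h_deriv : ∫ x in s, x ^ α * ‖deriv z x‖ ^ 2 = ∫ x : ℝ, x ^ α * ‖deriv z x‖ ^ 2 :=
    setIntegral_eq_integral_of_forall_compl_eq_zero fun x hx ↦ by
      simp [deriv_of_notMem_tsupport fun h ↦ hx (hzs h)]
  have h_singular : ∫ x in s, ‖z x‖ ^ 2 / x ^ (2 - α) = ∫ x : ℝ, x ^ (α - 2) * ‖z x‖ ^ 2 := by
    rw [setIntegral_div_rpow_eq_integral_rpow_neg_mul (hs.trans Set.Ioi_subset_Ici_self)
      ((support_norm_sq z).trans_subset ((subset_tsupport z).trans hzs)), neg_sub]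
  have h_remainder : 0 ≤ ∫ x : ℝ, x ^ (α - 2) * ‖x • deriv z x - ((1 - α) / 2) • z x‖ ^ 2 := by
    refine integral_nonneg fun x ↦ ?_
    by_cases hx : x ∈ tsupport z
    · exact mul_nonneg (Real.rpow_nonneg (hs (hzs hx)).le _) (sq_nonneg _)
    · simp [image_eq_zero_of_notMem_tsupport hx, deriv_of_notMem_tsupport hx]
  rw [h_deriv, h_singular,
    integral_rpow_mul_norm_deriv_sq_eq hz hz_compact (hzs.trans hs) α ((1 - α) / 2)]
  linarith

end Hardy

/-- Hardy-type inequality: for `0 ≤ α < 2` and any smooth `z` with compact support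
contained in `(0,1)`,
`((1-α)²/4) ∫₀¹ z(x)²/x^(2-α) dx ≤ ∫₀¹ x^α z'(x)² dx`. -/
theorem hardy_inequality (α : ℝ) (hα0 : 0 ≤ α) (hα2 : α < 2)
    (z : ℝ → ℝ) (hz : ContDiff ℝ (⊤ : ℕ∞) z) (hsupp : tsupport z ⊆ Set.Ioo 0 1) :
    (1 - α) ^ 2 / 4 * (∫ x in Set.Ioo (0 : ℝ) 1, z x ^ 2 / x ^ (2 - α)) ≤
      ∫ x in Set.Ioo (0 : ℝ) 1, x ^ α * deriv z x ^ 2 := by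
  have hz_compact : HasCompactSupport z :=
    isCompact_Icc.of_isClosed_subset (isClosed_tsupport z) (hsupp.trans Set.Ioo_subset_Icc_self)
  simpa using hardy_inequality_general (hz.of_le (by simp)) hz_compact Set.Ioo_subset_Ioi_self
    hsupp α
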